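/- arXiv:1605.09430 — 2 statements merged into one kernel-verified Lean document; each statement's English description precedes it below -/
import Mathlib

section
/- Let P, Q ∈ K[x,y] with [P,Q] ∈ K∖{0}. Let (ρ,σ) be a direction with ρ > 0 and σ < 0 such that Supp(ℓ_{ρ,σ}(P)) has at least two elements, and write (a',b') := en_{ρ,σ}(P). If a' > b' > 0, then ρ + σ < 0 (i.e. the direction (ρ,σ) lies strictly between (0,−1) and (1,−1)). -/
open MvPolynomial

noncomputable section

variable {K : Type*} [Field K] [CharZero K]

/-- The support of `P` as a set of pairs `(i,j)` of exponents of `x^i y^j`. -/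
def Supp (P : MvPolynomial (Fin 2) K) : Set (ℕ × ℕ) :=
  {p | MvPolynomial.coeff (Finsupp.single 0 p.1 + Finsupp.single 1 p.2) P ≠ 0}

/-- The Jacobian bracket `[P,Q] = ∂ₓP ∂_yQ − ∂ₓQ ∂_yP`. -/
def Jb (P Q : MvPolynomial (Fin 2) K) : MvPolynomial (Fin 2) K :=
  pderiv 0 P * pderiv 1 Q - pderiv 0 Q * pderiv 1 P

/-- The `(ρ,σ)`-degree `v_{ρ,σ}(P)` (the maximum of `ρi+σj` on the support). -/
def wdeg (ρ σ : ℤ) (P : MvPolynomial (Fin 2) K) : ℤ :=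
  sSup {d : ℤ | ∃ p ∈ Supp P, d = ρ * (p.1 : ℤ) + σ * (p.2 : ℤ)}

/-- The support of the `(ρ,σ)`-leading form of `P`. -/
def LeadSupp (ρ σ : ℤ) (P : MvPolynomial (Fin 2) K) : Set (ℕ × ℕ) :=
  {p | p ∈ Supp P ∧ ρ * (p.1 : ℤ) + σ * (p.2 : ℤ) = wdeg ρ σ P}

/-- `P` is `(ρ,σ)`-homogeneous. -/
def IsHomog (ρ σ : ℤ) (P : MvPolynomial (Fin 2) K) : Prop :=
  ∀ p ∈ Supp P, ∀ q ∈ Supp P,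
    ρ * (p.1 : ℤ) + σ * (p.2 : ℤ) = ρ * (q.1 : ℤ) + σ * (q.2 : ℤ)

/-- `P` is a monomial: its support has at most one point. -/
def IsMonomial (P : MvPolynomial (Fin 2) K) : Prop := (Supp P).Subsingleton

/-- `e` is the point `en_{ρ,σ}(P)`: the point of the support of the leading form
with largest second coordinate. -/
def IsEn (ρ σ : ℤ) (P : MvPolynomial (Fin 2) K) (e : ℕ × ℕ) : Prop :=
  e ∈ LeadSupp ρ σ P ∧ ∀ q ∈ LeadSupp ρ σ P, q.2 ≤ e.2

/-- `e` is the point `st_{ρ,σ}(P)`: the point of the support of the leading form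
with smallest second coordinate. -/
def IsSt (ρ σ : ℤ) (P : MvPolynomial (Fin 2) K) (e : ℕ × ℕ) : Prop :=
  e ∈ LeadSupp ρ σ P ∧ ∀ q ∈ LeadSupp ρ σ P, e.2 ≤ q.2


/-- A rational solution `u/m` of the ODE has no poles. -/
lemma ode_unit (p u m : Polynomial K) (v w : ℤ) (κ : K) (hp : p ≠ 0) (hm : m ≠ 0)
    (hv : 0 < v) (hw : 0 ≤ w) (hcop : IsCoprime u m)
    (H : (v : Polynomial K) * p * (u.derivative * m - u * m.derivative)
      - (w : Polynomial K) * u * m * p.derivative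
      = Polynomial.C κ * Polynomial.X * m ^ 2 * p.derivative) : IsUnit m := by
  by_contra hmu
  obtain ⟨q, hq, hqm⟩ := WfDvdMonoid.exists_irreducible_factor hmu hm
  obtain ⟨m1, hm1, hqm1⟩ :=
    (FiniteMultiplicity.of_not_isUnit hq.not_isUnit hm).exists_eq_pow_mul_and_not_dvd
  obtain ⟨p1, hp1, hqp1⟩ :=
    (FiniteMultiplicity.of_not_isUnit hq.not_isUnit hp).exists_eq_pow_mul_and_not_dvd
  have hk0 : multiplicity q m ≠ 0 := by
    intro h0
    rw [h0, pow_zero, one_mul] at hm1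
    exact hqm1 (hm1 ▸ hqm)
  obtain ⟨k, hk⟩ := Nat.exists_eq_succ_of_ne_zero hk0
  rw [hk, Nat.succ_eq_add_one] at hm1
  generalize multiplicity q p = e at hp1
  have hder : ∀ (n : ℕ) (r : Polynomial K), q * (q ^ n * r).derivative
      = q ^ n * ((n : Polynomial K) * q.derivative * r + q * r.derivative) := by
    intro n r
    rw [Polynomial.derivative_mul, Polynomial.derivative_pow]
    cases n with
    | zero => simp
    | succ n => simp; ring
  have h1 := hder (k + 1) m1
  have h2 := hder e p1
  rw [← hm1] at h1
  rw [← hp1] at h2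
  have hqu : ¬ q ∣ u := by
    intro h
    exact hq.not_isUnit (hcop.isUnit_of_dvd' h hqm)
  have hqd : ¬ q ∣ q.derivative := by
    intro h
    have hd : q.derivative ≠ 0 := by
      intro h0
      have := Polynomial.derivative_eq_zero.mp h0
      have h3 := hq.natDegree_pos
      omega
    have := Polynomial.degree_le_of_dvd h hd
    have h3 := Polynomial.degree_derivative_lt hq.ne_zero
    exact absurd this (not_le.mpr h3)
  have hq0 : q ^ (e + (k + 1)) ≠ 0 := pow_ne_zero _ hq.ne_zero
  have key : (v : Polynomial K) * p1 * (u.derivative * q * m1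
        - u * (((k + 1 : ℕ) : Polynomial K) * q.derivative * m1 + q * m1.derivative))
      - (w : Polynomial K) * u * m1 * ((e : Polynomial K) * q.derivative * p1 + q * p1.derivative)
      = Polynomial.C κ * Polynomial.X * q * q ^ k * m1 ^ 2 *
        ((e : Polynomial K) * q.derivative * p1 + q * p1.derivative) := by
    apply mul_left_cancel₀ hq0
    have H' := congrArg (fun z => q * z) H
    beta_reduce at H'
    have e1 : q * ((v : Polynomial K) * p * (u.derivative * m - u * m.derivative)
      - (w : Polynomial K) * u * m * p.derivative) =
      (v : Polynomial K) * p * (u.derivative * q * m - u * (q * m.derivative))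
      - (w : Polynomial K) * u * m * (q * p.derivative) := by ring
    have e2 : q * (Polynomial.C κ * Polynomial.X * m ^ 2 * p.derivative) =
      Polynomial.C κ * Polynomial.X * m ^ 2 * (q * p.derivative) := by ring
    rw [e1, e2, h1, h2] at H'
    rw [hm1, hp1] at H'
    linear_combination H'
  have hdvd : q ∣ ((v * (k + 1) + w * e : ℤ) : Polynomial K) * (p1 * (u * (m1 * q.derivative))) := by
    refine ⟨(v : Polynomial K) * p1 * (u.derivative * m1 - u * m1.derivative)
      - (w : Polynomial K) * u * m1 * p1.derivative - Polynomial.C κ * Polynomial.X * q ^ k * m1 ^ 2 *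
        ((e : Polynomial K) * q.derivative * p1 + q * p1.derivative), ?_⟩
    push_cast
    push_cast at key
    linear_combination -key
  have hpr := hq.prime
  rcases hpr.dvd_or_dvd hdvd with h | h
  · have hpos : (v * (k + 1) + w * e : ℤ) ≠ 0 := by positivity
    have : IsUnit ((v * (k + 1) + w * e : ℤ) : Polynomial K) := by
      rw [← Polynomial.C_eq_intCast]
      rw [Polynomial.isUnit_C]
      exact (Int.cast_ne_zero.mpr hpos).isUnit
    exact hq.not_isUnit (isUnit_of_dvd_unit h this)
  · rcases hpr.dvd_or_dvd h with h | h
    · exact hqp1 h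
    rcases hpr.dvd_or_dvd h with h | h
    · exact hqu h
    rcases hpr.dvd_or_dvd h with h | h
    · exact hqm1 h
    · exact hqd h

/-- A polynomial solution forces `p` to be a monomial. -/
lemma ode_poly (p F : Polynomial K) (v w : ℤ) (κ : K) (hκ : κ ≠ 0)
    (hv : 0 < v) (hw : 0 ≤ w) (hb : 0 < p.natDegree) (hvw : w * p.natDegree < v)
    (hgap : 0 < w → p.coeff (p.natDegree - 1) = 0)
    (H : (v : Polynomial K) * p * F.derivative
      - (w : Polynomial K) * F * p.derivative
      = Polynomial.C κ * Polynomial.X * p.derivative) :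
    ∀ j, p.coeff j ≠ 0 → j = p.natDegree := by
  have hp : p ≠ 0 := by rintro rfl; simp at hb
  have hpb : p.coeff p.natDegree ≠ 0 := by
    rw [Polynomial.coeff_natDegree]; exact Polynomial.leadingCoeff_ne_zero.mpr hp
  obtain ⟨b, hbd⟩ := Nat.exists_eq_succ_of_ne_zero hb.ne'
  have hF : F.natDegree ≤ 1 := by
    by_contra hn
    push Not at hn
    obtain ⟨n, hnd⟩ : ∃ n, F.natDegree = n + 2 := ⟨F.natDegree - 2, by omega⟩
    have hF0 : F.coeff (n + 2) ≠ 0 := by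
      rw [← hnd, Polynomial.coeff_natDegree]
      apply Polynomial.leadingCoeff_ne_zero.mpr
      rintro rfl; simp at hn
    have h1 : (p * F.derivative).coeff ((b + 1) + (n + 1))
        = p.coeff (b + 1) * (F.coeff (n + 2) * ((n : K) + 2)) := by
      rw [Polynomial.coeff_mul_add_eq_of_natDegree_le (by omega)]
      · rw [Polynomial.coeff_derivative]; push_cast; ring
      · exact (Polynomial.natDegree_derivative_le F).trans (by omega)
    have h2 : (F * p.derivative).coeff ((n + 2) + b)
        = F.coeff (n + 2) * (p.coeff (b + 1) * ((b : K) + 1)) := by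
      rw [Polynomial.coeff_mul_add_eq_of_natDegree_le (by omega)]
      · rw [Polynomial.coeff_derivative]
      · exact (Polynomial.natDegree_derivative_le p).trans (by omega)
    have h3 := congrArg (fun z => Polynomial.coeff z ((n + b + 1) + 1)) H
    simp only [Polynomial.coeff_sub, mul_assoc, ← Polynomial.C_eq_intCast, Polynomial.coeff_C_mul,
      Polynomial.coeff_X_mul] at h3
    rw [show (b + 1) + (n + 1) = n + b + 1 + 1 by ring] at h1
    rw [show (n + 2) + b = n + b + 1 + 1 by ring] at h2
    have h4 : p.derivative.coeff (n + b + 1) = 0 := by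
      rw [Polynomial.coeff_derivative, Polynomial.coeff_eq_zero_of_natDegree_lt (by omega), zero_mul]
    rw [h1, h2, h4, mul_zero] at h3
    rw [hbd, Nat.succ_eq_add_one] at hpb
    have h5 : ((v * (n + 2) - w * (b + 1) : ℤ) : K) * (p.coeff (b + 1) * F.coeff (n + 2)) = 0 := by
      push_cast
      linear_combination h3
    rcases mul_eq_zero.mp h5 with h6 | h6
    · have h7 : (v * (n + 2) - w * (b + 1) : ℤ) = 0 := by exact_mod_cast h6
      rw [hbd] at hvw
      push_cast at hvw
      nlinarith [mul_nonneg hv.le (Nat.cast_nonneg (α := ℤ) n)]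
    · exact mul_ne_zero hpb hF0 h6
  obtain ⟨α, β, rfl⟩ := Polynomial.exists_eq_X_add_C_of_natDegree_le_one hF
  have hth : ∀ j : ℕ, (Polynomial.X * p.derivative).coeff j = (j : K) * p.coeff j := by
    intro j
    cases j with
    | zero => simp
    | succ j => rw [Polynomial.coeff_X_mul, Polynomial.coeff_derivative]; push_cast; ring
  have hc : ∀ j : ℕ, (v : K) * α * p.coeff j - w * α * (j * p.coeff j)
      - w * β * (p.coeff (j + 1) * (j + 1)) = κ * (j * p.coeff j) := by
    intro j
    have H2 : Polynomial.C ((v : K) * α) * p - Polynomial.C (w * α : K) * (Polynomial.X * p.derivative)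
        - Polynomial.C (w * β : K) * p.derivative = Polynomial.C κ * (Polynomial.X * p.derivative) := by
      have : (Polynomial.C α * Polynomial.X + Polynomial.C β : Polynomial K).derivative = Polynomial.C α := by
        simp
      rw [this] at H
      simp only [map_mul, map_intCast]
      linear_combination H
    have H3 := congrArg (fun z => Polynomial.coeff z j) H2
    simp only [Polynomial.coeff_sub, Polynomial.coeff_C_mul, hth, Polynomial.coeff_derivative] at H3
    linear_combination H3
  have hwβ : (w : K) * β = 0 := by
    rcases hw.eq_or_lt with h0 | h0
    · rw [← h0]; simp
    · have h1 := hc b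
      have h2 := hgap h0
      rw [hbd] at h2 hpb
      simp only [Nat.succ_eq_add_one, Nat.add_sub_cancel] at h2 hpb
      rw [h2] at h1
      have h3 : (w : K) * β * (p.coeff (b + 1) * (b + 1)) = 0 := by linear_combination -h1
      rcases mul_eq_zero.mp h3 with h4 | h4
      · exact h4
      · exact absurd h4 (mul_ne_zero hpb (by exact_mod_cast Nat.succ_ne_zero b))
  have hc2 : ∀ j : ℕ, p.coeff j ≠ 0 → (v : K) * α - (w * α + κ) * j = 0 := by
    intro j hj
    have h1 := hc j
    rw [hwβ] at h1
    apply mul_right_cancel₀ hj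
    linear_combination h1
  intro j hj
  by_contra hne
  have h1 := hc2 j hj
  have h2 := hc2 _ hpb
  have h3 : ((w : K) * α + κ) * ((j : K) - p.natDegree) = 0 := by linear_combination h2 - h1
  rcases mul_eq_zero.mp h3 with h4 | h4
  · rw [h4] at h1
    have h5 : (v : K) * α = 0 := by linear_combination h1
    rcases mul_eq_zero.mp h5 with h6 | h6
    · exact hv.ne' (by exact_mod_cast h6)
    · rw [h6] at h4
      exact hκ (by linear_combination h4)
  · exact hne (by exact_mod_cast sub_eq_zero.mp h4)

lemma ode_main (p f n : Polynomial K) (v w d dn : ℤ) (κ : K) (hκ : κ ≠ 0)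
    (hv : 0 < v) (hw : 0 ≤ w) (hb : 0 < p.natDegree) (hvw : w * p.natDegree < v)
    (hgap : 0 < w → p.coeff (p.natDegree - 1) = 0) (hd : d = w + dn) (hn : n ≠ 0)
    (H1 : (v : Polynomial K) * p * f.derivative - (d : Polynomial K) * f * p.derivative
      = Polynomial.C κ * Polynomial.X * n * p.derivative)
    (H2 : (v : Polynomial K) * p * n.derivative = (dn : Polynomial K) * n * p.derivative) :
    ∀ j, p.coeff j ≠ 0 → j = p.natDegree := by
  have hp : p ≠ 0 := by rintro rfl; simp at hb
  obtain ⟨g, u, m, hg, hcop, hf', hn'⟩ : ∃ g u m : Polynomial K, g ≠ 0 ∧ IsCoprime u m ∧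
      f = g * u ∧ n = g * m := by
    classical
    obtain ⟨u, m, h1, h2, h3⟩ := extract_gcd f n
    refine ⟨gcd f n, u, m, ?_, (gcd_isUnit_iff u m).mp h3, h1, h2⟩
    intro h0
    rw [h0, zero_mul] at h2
    exact hn h2
  have hm : m ≠ 0 := by rintro rfl; simp at hn'; exact hn hn'
  have H : (v : Polynomial K) * p * (u.derivative * m - u * m.derivative)
      - (w : Polynomial K) * u * m * p.derivative
      = Polynomial.C κ * Polynomial.X * m ^ 2 * p.derivative := by
    apply mul_left_cancel₀ (pow_ne_zero 2 hg)
    rw [hd] at H1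
    rw [hf', hn'] at H1
    rw [hn'] at H2
    simp only [Polynomial.derivative_mul] at H1 H2
    push_cast at H1
    linear_combination g * m * H1 - g * u * H2
  have hu := ode_unit p u m v w κ hp hm hv hw hcop H
  obtain ⟨r, hr, hrm⟩ := Polynomial.isUnit_iff.mp hu
  have hr0 : r ≠ 0 := hr.ne_zero
  refine ode_poly p (Polynomial.C r⁻¹ * u) v w κ hκ hv hw hb hvw hgap ?_
  rw [← hrm] at H
  have hrr : Polynomial.C r⁻¹ * Polynomial.C r = (1 : Polynomial K) := by
    rw [← Polynomial.C_mul, inv_mul_cancel₀ hr0, Polynomial.C_1]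
  rw [Polynomial.derivative_mul]
  simp only [Polynomial.derivative_C, mul_zero, sub_zero, zero_mul, zero_add] at H ⊢
  apply mul_left_cancel₀ (pow_ne_zero 2 (Polynomial.C_ne_zero.mpr hr0))
  linear_combination H + (Polynomial.C r * ((v : Polynomial K) * p * u.derivative - (w : Polynomial K) * u * p.derivative)) * hrr


/-- The substitution `x ↦ t^{-ρ}`, `y ↦ Y t^{-σ}`. -/
def phi (ρ σ : ℤ) : MvPolynomial (Fin 2) K →+* HahnSeries ℤ (Polynomial K) :=
  eval₂Hom ((HahnSeries.C : Polynomial K →+* HahnSeries ℤ (Polynomial K)).comp Polynomial.C)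
    ![HahnSeries.single (-ρ) 1, HahnSeries.single (-σ) Polynomial.X]

lemma phi_monomial (ρ σ : ℤ) (m : Fin 2 →₀ ℕ) (a : K) :
    phi ρ σ (monomial m a) =
      HahnSeries.single (-(ρ * (m 0 : ℤ) + σ * (m 1 : ℤ))) (Polynomial.monomial (m 1) a) := by
  unfold phi
  rw [eval₂Hom_monomial, Finsupp.prod_fintype _ _ (by simp)]
  simp only [Fin.prod_univ_two, Matrix.cons_val_zero, Matrix.cons_val_one, HahnSeries.single_pow,
    HahnSeries.single_mul_single, RingHom.comp_apply, HahnSeries.C_apply]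
  rw [show (0 + (m 0 • -ρ + m 1 • -σ)) = -(ρ * (m 0 : ℤ) + σ * (m 1 : ℤ)) by simp; ring]
  simp [Polynomial.C_mul_X_pow_eq_monomial]

lemma phi_coeff (ρ σ : ℤ) (hρ : ρ ≠ 0) (f : MvPolynomial (Fin 2) K) (i j : ℕ) :
    ((phi ρ σ f).coeff (-(ρ * (i : ℤ) + σ * (j : ℤ)))).coeff j =
      MvPolynomial.coeff (Finsupp.single 0 i + Finsupp.single 1 j) f := by
  induction f using MvPolynomial.induction_on' with
  | monomial m a =>
    rw [phi_monomial, MvPolynomial.coeff_monomial, HahnSeries.coeff_single]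
    by_cases h : m = Finsupp.single 0 i + Finsupp.single 1 j
    · subst h
      simp
    · rw [if_neg h]
      split_ifs with h1
      · rw [Polynomial.coeff_monomial]
        rw [if_neg]
        intro h2
        apply h
        rw [h2] at h1
        have h3 : ρ * ((i : ℤ) - m 0) = 0 := by linear_combination -h1
        have h4 : (i : ℤ) - m 0 = 0 := (mul_eq_zero.mp h3).resolve_left hρ
        ext t
        fin_cases t
        · simp; omega
        · simp [h2]
      · simp
  | add f g hf hg =>
    rw [map_add, HahnSeries.coeff_add, Polynomial.coeff_add, hf, hg, MvPolynomial.coeff_add]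

lemma phi_coeff_ne (ρ σ : ℤ) (f : MvPolynomial (Fin 2) K) (e : ℤ) (j : ℕ)
    (h : ((phi ρ σ f).coeff e).coeff j ≠ 0) : ∃ i : ℕ, e = -(ρ * (i : ℤ) + σ * (j : ℤ)) := by
  induction f using MvPolynomial.induction_on' with
  | monomial m a =>
    rw [phi_monomial, HahnSeries.coeff_single] at h
    split_ifs at h with h1
    · rw [Polynomial.coeff_monomial] at h
      split_ifs at h with h2
      · subst h2
        exact ⟨m 0, h1⟩
      · simp at h
    · simp at h
  | add f g hf hg =>
    by_cases h1 : ((phi ρ σ f).coeff e).coeff j = 0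
    · apply hg
      simpa [h1] using h
    · exact hf h1

lemma phi_ne_zero (ρ σ : ℤ) (hρ : ρ ≠ 0) (f : MvPolynomial (Fin 2) K) (hf : f ≠ 0) :
    phi ρ σ f ≠ 0 := by
  intro h
  apply hf
  ext m
  have := phi_coeff ρ σ hρ f (m 0) (m 1)
  rw [h] at this
  have hm : m = Finsupp.single 0 (m 0) + Finsupp.single 1 (m 1) := by
    ext t; fin_cases t <;> simp
  rw [← hm] at this
  simpa using this.symm

lemma phi_theta (ρ σ : ℤ) (f : MvPolynomial (Fin 2) K) (e : ℤ) :
    (phi ρ σ (X 1 * pderiv 1 f)).coeff e =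
      Polynomial.X * Polynomial.derivative ((phi ρ σ f).coeff e) := by
  induction f using MvPolynomial.induction_on' with
  | monomial m a =>
    rw [X_mul_pderiv_monomial, map_nsmul, phi_monomial, HahnSeries.coeff_nsmul, Pi.smul_apply,
      HahnSeries.coeff_single]
    split_ifs with h
    · rw [Polynomial.derivative_monomial]
      cases hm : m 1 with
      | zero => simp
      | succ n => 
        rw [Polynomial.X_mul_monomial, Polynomial.smul_monomial]
        simp [mul_comm]
    · simp
  | add f g hf hg => simp only [map_add, mul_add, HahnSeries.coeff_add, hf, hg]

/-- Weighted Euler operator. -/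
def eul (ρ σ : ℤ) (f : MvPolynomial (Fin 2) K) : MvPolynomial (Fin 2) K :=
  (ρ : MvPolynomial (Fin 2) K) * (X 0 * pderiv 0 f) + (σ : MvPolynomial (Fin 2) K) * (X 1 * pderiv 1 f)

lemma phi_eul (ρ σ : ℤ) (f : MvPolynomial (Fin 2) K) (e : ℤ) :
    (phi ρ σ (eul ρ σ f)).coeff e = ((-e : ℤ) : Polynomial K) * (phi ρ σ f).coeff e := by
  unfold eul
  induction f using MvPolynomial.induction_on' with
  | monomial m a =>
    rw [X_mul_pderiv_monomial, X_mul_pderiv_monomial, ← zsmul_eq_mul, ← zsmul_eq_mul]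
    rw [map_add, map_zsmul, map_zsmul, map_nsmul, map_nsmul, phi_monomial]
    simp only [HahnSeries.coeff_add, HahnSeries.coeff_smul, HahnSeries.coeff_single]
    split_ifs with h
    · rw [h]
      simp only [zsmul_eq_mul, nsmul_eq_mul]
      push_cast
      ring
    · simp
  | add f g hf hg =>
    simp only [map_add, mul_add, HahnSeries.coeff_add] at hf hg ⊢
    rw [← hf, ← hg]
    abel

lemma jb_eul (ρ σ : ℤ) (f g : MvPolynomial (Fin 2) K) :
    (ρ : MvPolynomial (Fin 2) K) * (X 0 * X 1 * Jb f g) =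
      eul ρ σ f * (X 1 * pderiv 1 g) - (X 1 * pderiv 1 f) * eul ρ σ g := by
  unfold eul Jb
  ring

lemma HS_coeff_mul {x y : HahnSeries ℤ (Polynomial K)} {a b : ℤ}
    (hx : ∀ e < a, x.coeff e = 0) (hy : ∀ e < b, y.coeff e = 0) :
    (∀ e < a + b, (x * y).coeff e = 0) ∧ (x * y).coeff (a + b) = x.coeff a * y.coeff b := by
  constructor
  · intro e he
    rw [HahnSeries.coeff_mul]
    apply Finset.sum_eq_zero
    rintro ⟨i, j⟩ hij
    rw [Finset.mem_antidiagonal] at hij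
    simp only at hij ⊢
    by_cases h : i < a
    · rw [hx i h, zero_mul]
    · rw [hy j (by omega), mul_zero]
  · rw [HahnSeries.coeff_mul]
    rw [Finset.sum_eq_single (a, b)]
    · rintro ⟨i, j⟩ hij hne
      rw [Finset.mem_antidiagonal] at hij
      simp only at hij ⊢
      by_cases h : i < a
      · rw [hx i h, zero_mul]
      by_cases h' : j < b
      · rw [hy j h', mul_zero]
      exfalso
      apply hne
      rw [Prod.mk.injEq]
      omega
    · intro h
      rw [Finset.mem_antidiagonal] at h
      simp only [HahnSeries.mem_support, and_true] at h
      by_cases h1 : x.coeff a = 0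
      · simp [h1]
      by_cases h2 : y.coeff b = 0
      · simp [h2]
      exact absurd ⟨h1, h2⟩ h

/-- Leading part of the bracket. -/
lemma phi_jb (ρ σ : ℤ) (f g : MvPolynomial (Fin 2) K) (a b : ℤ)
    (hf : ∀ e < a, (phi ρ σ f).coeff e = 0) (hg : ∀ e < b, (phi ρ σ g).coeff e = 0) :
    (∀ e < a + b, (phi ρ σ ((ρ : MvPolynomial (Fin 2) K) * (X 0 * X 1 * Jb f g))).coeff e = 0) ∧
    (phi ρ σ ((ρ : MvPolynomial (Fin 2) K) * (X 0 * X 1 * Jb f g))).coeff (a + b) =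
      Polynomial.X * (((-a : ℤ) : Polynomial K) * (phi ρ σ f).coeff a *
          Polynomial.derivative ((phi ρ σ g).coeff b)
        - ((-b : ℤ) : Polynomial K) * (phi ρ σ g).coeff b *
          Polynomial.derivative ((phi ρ σ f).coeff a)) := by
  rw [jb_eul ρ σ, map_sub, map_mul _ (eul ρ σ f), map_mul _ _ (eul ρ σ g)]
  have h1 := HS_coeff_mul (x := phi ρ σ (eul ρ σ f)) (y := phi ρ σ (X 1 * pderiv 1 g)) (a := a)
    (b := b) (fun e he => by rw [phi_eul, hf e he, mul_zero])
    (fun e he => by rw [phi_theta, hg e he]; simp)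
  have h2 := HS_coeff_mul (x := phi ρ σ (X 1 * pderiv 1 f)) (y := phi ρ σ (eul ρ σ g)) (a := a)
    (b := b) (fun e he => by rw [phi_theta, hf e he]; simp)
    (fun e he => by rw [phi_eul, hg e he, mul_zero])
  constructor
  · intro e he
    rw [HahnSeries.coeff_sub, h1.1 e he, h2.1 e he, sub_zero]
  · rw [HahnSeries.coeff_sub, h1.2, h2.2, phi_eul, phi_eul, phi_theta, phi_theta]
    ring



/-- Formal antiderivative with respect to the `i`-th variable. -/
def antid (i : Fin 2) : MvPolynomial (Fin 2) K →ₗ[K] MvPolynomial (Fin 2) K :=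
  (basisMonomials (Fin 2) K).constr K
    (fun m => monomial (m + Finsupp.single i 1) (((m i : K) + 1)⁻¹))

lemma antid_monomial (i : Fin 2) (m : Fin 2 →₀ ℕ) (a : K) :
    antid i (monomial m a) = monomial (m + Finsupp.single i 1) (a * ((m i : K) + 1)⁻¹) := by
  have h : (monomial m a : MvPolynomial (Fin 2) K) = a • basisMonomials (Fin 2) K m := by
    simp [smul_monomial]
  rw [h, map_smul, antid, Module.Basis.constr_basis, smul_monomial, smul_eq_mul]

lemma pderiv_antid (i : Fin 2) (f : MvPolynomial (Fin 2) K) : pderiv i (antid i f) = f := by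
  induction f using MvPolynomial.induction_on' with
  | monomial m a =>
    rw [antid_monomial, pderiv_monomial]
    have h : (m i : K) + 1 ≠ 0 := by exact_mod_cast Nat.succ_ne_zero (m i)
    simp [mul_assoc, inv_mul_cancel₀ h]
  | add f g hf hg => rw [map_add, map_add, hf, hg]

lemma pderiv_antid_ne (i j : Fin 2) (hij : i ≠ j) (f : MvPolynomial (Fin 2) K) :
    pderiv j (antid i f) = antid i (pderiv j f) := by
  induction f using MvPolynomial.induction_on' with
  | monomial m a =>
    rw [antid_monomial, pderiv_monomial, pderiv_monomial, antid_monomial]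
    by_cases h0 : m j = 0
    · simp [h0, hij]
    · have h1 : m + Finsupp.single i 1 - Finsupp.single j 1
          = m - Finsupp.single j 1 + Finsupp.single i 1 := by
        ext t
        by_cases h : t = j
        · subst h
          simp [hij]
        · simp [Finsupp.single_apply, Ne.symm h]
      rw [h1]
      congr 1
      simp [hij, hij.symm, mul_assoc, mul_comm]
      ring
  | add f g hf hg => simp only [map_add, hf, hg]

lemma exists_potential (A B : MvPolynomial (Fin 2) K) (h : pderiv 1 A = pderiv 0 B) :
    ∃ S, pderiv 0 S = A ∧ pderiv 1 S = B := by
  refine ⟨antid 0 A + antid 1 (B - antid 0 (pderiv 1 A)), ?_, ?_⟩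
  · rw [map_add, pderiv_antid, pderiv_antid_ne 1 0 (by decide), map_sub, pderiv_antid, h]
    simp
  · rw [map_add, pderiv_antid, pderiv_antid_ne 0 1 (by decide)]
    ring

lemma pderiv_comm' (f : MvPolynomial (Fin 2) K) :
    pderiv 0 (pderiv 1 f) = pderiv 1 (pderiv 0 f) := by
  induction f using MvPolynomial.induction_on' with
  | monomial m a =>
    simp only [pderiv_monomial]
    rw [tsub_right_comm]
    congr 1
    simp
    ring
  | add f g hf hg => simp only [map_add, hf, hg]

lemma exists_S (P Q : MvPolynomial (Fin 2) K) (c : K) (h : Jb P Q = C c) :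
    ∃ S, Jb P S = C c * (X 1 * pderiv 1 P) := by
  obtain ⟨S, h0, h1⟩ := exists_potential (Q * pderiv 0 P - C c * X 1) (Q * pderiv 1 P) (by
    simp only [map_sub, Derivation.leibniz, pderiv_C, pderiv_X_self, smul_eq_mul]
    rw [pderiv_comm']
    unfold Jb at h
    linear_combination h)
  refine ⟨S, ?_⟩
  unfold Jb
  rw [h0, h1]
  ring

/-- Evaluation of a polynomial in two variables at `(P, S)`. -/
def evPS (P S : MvPolynomial (Fin 2) K) : Polynomial (Polynomial K) →+* MvPolynomial (Fin 2) K :=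
  Polynomial.eval₂RingHom (Polynomial.aeval P).toRingHom S

lemma evPS_monomial (P S : MvPolynomial (Fin 2) K) (n : ℕ) (g : Polynomial K) :
    evPS P S (Polynomial.monomial n g) = Polynomial.aeval P g * S ^ n := by
  simp [evPS]

/-- `[P, ·]` as a derivation. -/
def jbD (P : MvPolynomial (Fin 2) K) :
    Derivation K (MvPolynomial (Fin 2) K) (MvPolynomial (Fin 2) K) :=
  pderiv 0 P • pderiv 1 - pderiv 1 P • pderiv 0

lemma jbD_apply (P f : MvPolynomial (Fin 2) K) : jbD P f = Jb P f := by
  simp [jbD, Jb, mul_comm]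

lemma jb_evPS (P S : MvPolynomial (Fin 2) K) (ψ : Polynomial (Polynomial K)) :
    Jb P (evPS P S ψ) = evPS P S (Polynomial.derivative ψ) * Jb P S := by
  rw [← jbD_apply, ← jbD_apply]
  induction ψ using Polynomial.induction_on' with
  | add f g hf hg => simp only [map_add, hf, hg, add_mul]
  | monomial n g =>
    rw [Polynomial.derivative_monomial, evPS_monomial, evPS_monomial, Derivation.leibniz,
      Derivation.map_aeval, Derivation.leibniz_pow]
    have : jbD P P = 0 := by rw [jbD_apply, Jb]; ring
    rw [this]
    simp
    ring

lemma aeval_inj (P : MvPolynomial (Fin 2) K) (hP : pderiv 1 P ≠ 0) (g : Polynomial K)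
    (hg : Polynomial.aeval P g = 0) : g = 0 := by
  induction hn : g.natDegree using Nat.strong_induction_on generalizing g with
  | _ n ih =>
    by_cases h0 : g.natDegree = 0
    · rw [Polynomial.eq_C_of_natDegree_eq_zero h0] at hg ⊢
      simpa using hg
    · have h1 := congrArg (pderiv 1) hg
      rw [Derivation.map_aeval, map_zero, smul_eq_mul] at h1
      have h2 := (mul_eq_zero.mp h1).resolve_right hP
      have h3 := ih _ (hn ▸ Polynomial.natDegree_derivative_lt h0) _ h2 rfl
      exact absurd (Polynomial.derivative_eq_zero.mp h3) h0

lemma exists_relation (P S : MvPolynomial (Fin 2) K) (a b : ℕ) (ha : 0 < a) :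
    ∃ ψ : Polynomial (Polynomial K), ψ ≠ 0 ∧ ∀ i n : ℕ, a * n = i * b →
      MvPolynomial.coeff (Finsupp.single 0 i + Finsupp.single 1 n) (evPS P S ψ) = 0 := by
  set T := P.totalDegree + S.totalDegree with hT
  set N := T + 2 with hN
  let L : (Fin N × Fin N → K) →ₗ[K] MvPolynomial (Fin 2) K :=
    Fintype.linearCombination K (fun ij : Fin N × Fin N => P ^ (ij.1 : ℕ) * S ^ (ij.2 : ℕ))
  let Λ : (Fin N × Fin N → K) →ₗ[K] (Fin (N * T + 1) → K) :=
    LinearMap.pi (fun s => (MvPolynomial.lcoeff K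
      (Finsupp.single 0 (s : ℕ) + Finsupp.single 1 (b * (s : ℕ) / a))) ∘ₗ L)
  have hker : LinearMap.ker Λ ≠ ⊥ := by
    apply LinearMap.ker_ne_bot_of_finrank_lt
    simp only [Module.finrank_fintype_fun_eq_card, Fintype.card_fin, Fintype.card_prod]
    rw [hN]
    nlinarith
  obtain ⟨c, hc, hc0⟩ := (Submodule.ne_bot_iff _).mp hker
  rw [LinearMap.mem_ker] at hc
  refine ⟨∑ ij : Fin N × Fin N,
    Polynomial.monomial (ij.2 : ℕ) (Polynomial.monomial (ij.1 : ℕ) (c ij)), ?_, ?_⟩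
  · intro h0
    apply hc0
    ext ⟨i, j⟩
    have h1 := congrArg (fun z => (Polynomial.coeff (Polynomial.coeff z (j : ℕ)) (i : ℕ))) h0
    simp only [Polynomial.finsetSum_coeff, Polynomial.coeff_monomial, Polynomial.coeff_zero] at h1
    rw [Finset.sum_eq_single (i, j)] at h1
    · simpa using h1
    · rintro ⟨i', j'⟩ _ hne
      by_cases hj : (j' : ℕ) = j
      · rw [if_pos hj, Polynomial.coeff_monomial, if_neg]
        intro hi
        apply hne
        exact Prod.ext (Fin.ext hi) (Fin.ext hj)
      · simp [hj]
    · simp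
  · have hev : evPS P S (∑ ij : Fin N × Fin N,
        Polynomial.monomial (ij.2 : ℕ) (Polynomial.monomial (ij.1 : ℕ) (c ij))) = L c := by
      rw [map_sum, Fintype.linearCombination_apply]
      apply Finset.sum_congr rfl
      intro ij _
      rw [evPS_monomial, Polynomial.aeval_monomial, Algebra.smul_def, mul_assoc]
    rw [hev]
    intro i n hin
    by_contra hne
    have hdeg : (L c).totalDegree ≤ N * T := by
      rw [Fintype.linearCombination_apply]
      apply totalDegree_finsetSum_le
      rintro ⟨i, j⟩ _
      refine (totalDegree_smul_le _ _).trans ((totalDegree_mul _ _).trans ?_)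
      have h1 := totalDegree_pow P (i : ℕ)
      have h2 := totalDegree_pow S (j : ℕ)
      have h3 : (i : ℕ) * P.totalDegree ≤ N * P.totalDegree := Nat.mul_le_mul_right _ i.2.le
      have h4 : (j : ℕ) * S.totalDegree ≤ N * S.totalDegree := Nat.mul_le_mul_right _ j.2.le
      rw [hT, mul_add]
      simp only
      omega
    have hi : i ≤ N * T := by
      have h1 := le_totalDegree (MvPolynomial.mem_support_iff.mpr hne)
      rw [Finsupp.sum_fintype _ _ (by simp)] at h1
      simp [Fin.sum_univ_two] at h1
      omega
    have h2 := congrFun hc ⟨i, by omega⟩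
    apply hne
    have h3 : b * i / a = n := by
      rw [mul_comm b i, ← hin]
      exact Nat.mul_div_cancel_left n ha
    simpa [Λ, h3] using h2

/-- The leading coefficient of `f` after substitution. -/
def lc (ρ σ : ℤ) (f : MvPolynomial (Fin 2) K) : Polynomial K :=
  (phi ρ σ f).coeff (phi ρ σ f).order

/-- The leading form of `f` commutes with the one of `P`. -/
def CommP (ρ σ v : ℤ) (p : Polynomial K) (f : MvPolynomial (Fin 2) K) : Prop :=
  (v : Polynomial K) * p * Polynomial.derivative (lc ρ σ f) =
    ((-(phi ρ σ f).order : ℤ) : Polynomial K) * lc ρ σ f * Polynomial.derivative p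

lemma lc_ne_zero (ρ σ : ℤ) (hρ : ρ ≠ 0) (f : MvPolynomial (Fin 2) K) (hf : f ≠ 0) :
    lc ρ σ f ≠ 0 := by
  unfold lc
  exact HahnSeries.coeff_order_eq_zero.not.mpr (phi_ne_zero ρ σ hρ f hf)

lemma commP_ray (ρ σ : ℤ) (hρ : 0 < ρ) (a b : ℕ) (hb : 0 < b) (p : Polynomial K)
    (hpb : p.natDegree = b) (f : MvPolynomial (Fin 2) K) (hf : f ≠ 0)
    (hv : ρ * (a : ℤ) + σ * (b : ℤ) ≠ 0)
    (h : CommP ρ σ (ρ * (a : ℤ) + σ * (b : ℤ)) p f) :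
    ∃ i n : ℕ, a * n = i * b ∧
      MvPolynomial.coeff (Finsupp.single 0 i + Finsupp.single 1 n) f ≠ 0 := by
  have h0 := lc_ne_zero ρ σ hρ.ne' f hf
  have hp0 : p ≠ 0 := by rintro rfl; simp at hpb; omega
  set n := (lc ρ σ f).natDegree with hn
  have hl : (lc ρ σ f).coeff n ≠ 0 := by
    rw [hn]; exact Polynomial.leadingCoeff_ne_zero.mpr h0
  obtain ⟨i, hi⟩ := phi_coeff_ne ρ σ f _ n hl
  refine ⟨i, n, ?_, ?_⟩
  · unfold CommP at h
    have e1 : ∀ (z : ℤ) (g q : Polynomial K), (Polynomial.X * ((z : Polynomial K) * g * Polynomial.derivative q)).coeff (g.natDegree + q.natDegree) = (z : K) * (g.leadingCoeff * (q.leadingCoeff * (q.natDegree : K))) := by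
      intro z g q
      rw [show Polynomial.X * ((z : Polynomial K) * g * Polynomial.derivative q) = Polynomial.C (z : K) * (g * (Polynomial.X * Polynomial.derivative q)) by
        rw [map_intCast]; ring]
      rw [Polynomial.coeff_C_mul, Polynomial.coeff_mul_add_eq_of_natDegree_le le_rfl]
      · cases hq : q.natDegree with
        | zero => simp
        | succ k =>
          have hq2 : q.leadingCoeff = q.coeff (k + 1) := by rw [Polynomial.leadingCoeff, hq]
          have hg2 : g.coeff g.natDegree = g.leadingCoeff := rfl
          rw [Polynomial.coeff_X_mul, Polynomial.coeff_derivative, hq2, hg2]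
          push_cast
          ring
      · by_cases hq : q.natDegree = 0
        · rw [Polynomial.eq_C_of_natDegree_eq_zero hq]; simp
        · refine (Polynomial.natDegree_mul_le).trans ?_
          have := Polynomial.natDegree_derivative_lt hq
          have := Polynomial.natDegree_X_le (R := K)
          omega
    have h2 := congrArg (fun g => (Polynomial.X * g).coeff (p.natDegree + (lc ρ σ f).natDegree)) h
    beta_reduce at h2
    rw [e1, add_comm p.natDegree, e1, ← hn, hpb, hi, neg_neg] at h2
    have h3 : ((ρ * (a : ℤ) + σ * (b : ℤ) : ℤ) : K) * n = ((ρ * (i : ℤ) + σ * (n : ℤ) : ℤ) : K) * b := by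
      have hne : p.leadingCoeff * (lc ρ σ f).leadingCoeff ≠ 0 :=
        mul_ne_zero (Polynomial.leadingCoeff_ne_zero.mpr hp0) (Polynomial.leadingCoeff_ne_zero.mpr h0)
      apply mul_left_cancel₀ hne
      linear_combination h2
    have h4 : (ρ * (a : ℤ) + σ * (b : ℤ)) * n = (ρ * (i : ℤ) + σ * (n : ℤ)) * b := by
      exact_mod_cast h3
    have h5 : ρ * ((a : ℤ) * n - i * b) = 0 := by linear_combination h4
    have h6 := (mul_eq_zero.mp h5).resolve_left hρ.ne'
    have h7 : (a : ℤ) * n = i * b := by linarith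
    exact_mod_cast h7
  · rw [← phi_coeff ρ σ hρ.ne' f i n, ← hi]
    exact hl

lemma main_aux (P Q : MvPolynomial (Fin 2) K)
    (c : K) (hc : c ≠ 0) (hPQ : Jb P Q = MvPolynomial.C c)
    (ρ σ : ℤ) (hgcd : Int.gcd ρ σ = 1) (hρ : 0 < ρ) (hσ : σ < 0) (hw : 0 ≤ ρ + σ)
    (a b : ℕ) (hab : b < a) (hb : 0 < b) (v : ℤ) (hv : v = ρ * (a : ℤ) + σ * (b : ℤ))
    (p : Polynomial K) (hp : p = (phi ρ σ P).coeff (-v))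
    (hlow : ∀ e < -v, (phi ρ σ P).coeff e = 0) (hpb : p.natDegree = b) :
    ∀ j, p.coeff j ≠ 0 → j = b := by
  have hvw : (ρ + σ) * (b : ℤ) < v := by
    have : (0 : ℤ) < ρ * ((a : ℤ) - b) := mul_pos hρ (by omega)
    rw [hv]; linarith
  have hv0 : 0 < v := lt_of_le_of_lt (by positivity) hvw
  have hp0 : p ≠ 0 := by rintro rfl; simp at hpb; omega
  have hdp : Polynomial.derivative p ≠ 0 := by
    intro h
    have := Polynomial.derivative_eq_zero.mp h
    omega
  have hPy : pderiv 1 P ≠ 0 := by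
    intro h
    have h1 := phi_theta ρ σ P (-v)
    rw [h, mul_zero, map_zero, ← hp] at h1
    exact (mul_ne_zero Polynomial.X_ne_zero hdp) h1.symm
  obtain ⟨S, hS⟩ := exists_S P Q c hPQ
  -- bracket of leading forms
  have hbr : ∀ f : MvPolynomial (Fin 2) K,
      (∀ e < -v + (phi ρ σ f).order,
        (phi ρ σ ((ρ : MvPolynomial (Fin 2) K) * (X 0 * X 1 * Jb P f))).coeff e = 0) ∧
      (phi ρ σ ((ρ : MvPolynomial (Fin 2) K) * (X 0 * X 1 * Jb P f))).coeff
        (-v + (phi ρ σ f).order) =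
        Polynomial.X * ((v : Polynomial K) * p * Polynomial.derivative (lc ρ σ f)
        - ((-(phi ρ σ f).order : ℤ) : Polynomial K) * lc ρ σ f * Polynomial.derivative p) := by
    intro f
    have := phi_jb ρ σ P f (-v) (phi ρ σ f).order hlow
      (fun e he => HahnSeries.coeff_eq_zero_of_lt_order he)
    rw [neg_neg, ← hp] at this
    exact this
  have hex : ∃ n : ℕ, ∃ ψ : Polynomial (Polynomial K), ψ ≠ 0 ∧
      (evPS P S ψ = 0 ∨ ¬ CommP ρ σ v p (evPS P S ψ)) ∧ ψ.natDegree = n := by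
    obtain ⟨ψ, h1, h2⟩ := exists_relation P S a b (by omega)
    refine ⟨_, ψ, h1, ?_, rfl⟩
    by_contra hcon
    push Not at hcon
    obtain ⟨h3, h4⟩ := hcon
    rw [hv] at h4
    obtain ⟨i, n, h5, h6⟩ := commP_ray ρ σ hρ a b hb p hpb _ h3 (by rw [← hv]; exact hv0.ne') h4
    exact h6 (h2 i n h5)
  classical
  obtain ⟨ψ, hψ0, hψ, hψn⟩ := Nat.find_spec hex
  have hmin : ∀ χ : Polynomial (Polynomial K), χ ≠ 0 → χ.natDegree < ψ.natDegree →
      evPS P S χ ≠ 0 ∧ CommP ρ σ v p (evPS P S χ) := by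
    intro χ h1 h2
    rw [hψn] at h2
    have h3 := Nat.find_min hex h2
    by_contra hcon
    apply h3
    refine ⟨χ, h1, ?_, rfl⟩
    by_cases h4 : evPS P S χ = 0
    · exact Or.inl h4
    · exact Or.inr (fun h5 => hcon ⟨h4, h5⟩)
  by_cases hd : ψ.natDegree = 0
  · exfalso
    have hC := Polynomial.eq_C_of_natDegree_eq_zero hd
    set g := ψ.coeff 0
    have hg : g ≠ 0 := by
      intro h; apply hψ0; rw [hC, h]; simp
    have hev : evPS P S ψ = Polynomial.aeval P g := by
      rw [hC]; simp [evPS]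
    have hne : evPS P S ψ ≠ 0 := by
      rw [hev]; exact fun h => hg (aeval_inj P hPy g h)
    have hcm := hψ.resolve_left hne
    apply hcm
    have hj : Jb P (evPS P S ψ) = 0 := by
      rw [jb_evPS, hC]; simp
    have h1 := (hbr (evPS P S ψ)).2
    rw [hj, mul_zero, mul_zero, map_zero] at h1
    have h2 := (mul_eq_zero.mp h1.symm).resolve_left Polynomial.X_ne_zero
    exact sub_eq_zero.mp h2
  · have hdψ : Polynomial.derivative ψ ≠ 0 := fun h =>
      hd (Polynomial.derivative_eq_zero.mp h)
    obtain ⟨hN0, hNC⟩ := hmin _ hdψ (Polynomial.natDegree_derivative_lt hd)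
    set N := evPS P S (Polynomial.derivative ψ) with hN
    set f := evPS P S ψ with hf
    have hjf : Jb P f = N * (C c * (X 1 * pderiv 1 P)) := by
      rw [hf, jb_evPS, hS]
    have hf0 : f ≠ 0 := by
      intro h
      rw [h] at hjf
      have h1 : Jb P 0 = 0 := by simp [Jb]
      rw [h1] at hjf
      exact (mul_ne_zero hN0 (mul_ne_zero (by simpa using hc)
        (mul_ne_zero (X_ne_zero 1) hPy))) hjf.symm
    have hfC := hψ.resolve_left hf0
    have hκ : (ρ : K) * c ≠ 0 := mul_ne_zero (by exact_mod_cast hρ.ne') hc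
    have hrw : (ρ : MvPolynomial (Fin 2) K) * (X 0 * X 1 * Jb P f) =
        monomial (Finsupp.single 0 1 + Finsupp.single 1 1) ((ρ : K) * c) *
          (N * (X 1 * pderiv 1 P)) := by
      rw [hjf]
      have : (monomial (Finsupp.single 0 1 + Finsupp.single 1 1) ((ρ : K) * c) :
          MvPolynomial (Fin 2) K) = C ((ρ : K) * c) * (X 0 * X 1) := by
        rw [X, X, monomial_mul, C_mul_monomial]; simp
      rw [this, map_mul, map_intCast]
      ring
    have hmul1 := HS_coeff_mul (x := phi ρ σ N) (y := phi ρ σ (X 1 * pderiv 1 P))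
      (a := (phi ρ σ N).order) (b := -v) (fun e he => HahnSeries.coeff_eq_zero_of_lt_order he)
      (fun e he => by rw [phi_theta, hlow e he]; simp)
    have hmon : phi ρ σ (monomial (Finsupp.single 0 1 + Finsupp.single 1 1) ((ρ : K) * c)) =
        HahnSeries.single (-(ρ + σ)) (Polynomial.monomial 1 ((ρ : K) * c)) := by
      rw [phi_monomial]; simp
    have hmul2 := HS_coeff_mul
      (x := phi ρ σ (monomial (Finsupp.single 0 1 + Finsupp.single 1 1) ((ρ : K) * c)))
      (y := phi ρ σ N * phi ρ σ (X 1 * pderiv 1 P))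
      (a := -(ρ + σ)) (b := (phi ρ σ N).order + -v)
      (fun e he => by rw [hmon, HahnSeries.coeff_single_of_ne he.ne]) hmul1.1
    rw [hmul1.2, phi_theta, ← hp, ← map_mul, ← map_mul, ← hrw, hmon,
      HahnSeries.coeff_single_same] at hmul2
    obtain ⟨hA, hA'⟩ := hbr f
    obtain ⟨hB, hB'⟩ := hmul2
    have hAne : Polynomial.X * ((v : Polynomial K) * p * Polynomial.derivative (lc ρ σ f)
        - ((-(phi ρ σ f).order : ℤ) : Polynomial K) * lc ρ σ f * Polynomial.derivative p) ≠ 0 :=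
      mul_ne_zero Polynomial.X_ne_zero (fun h => hfC (sub_eq_zero.mp h))
    have hBne : Polynomial.monomial 1 ((ρ : K) * c) *
        (lc ρ σ N * (Polynomial.X * Polynomial.derivative p)) ≠ 0 :=
      mul_ne_zero (by simpa using hκ) (mul_ne_zero (lc_ne_zero ρ σ hρ.ne' N hN0)
        (mul_ne_zero Polynomial.X_ne_zero hdp))
    have heq : -v + (phi ρ σ f).order = -(ρ + σ) + ((phi ρ σ N).order + -v) := by
      rcases lt_trichotomy (-v + (phi ρ σ f).order) (-(ρ + σ) + ((phi ρ σ N).order + -v)) with h | h | h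
      · exact absurd (hA'.symm.trans (hB _ h)) hAne
      · exact h
      · exact absurd (hB'.symm.trans (hA _ h)) hBne
    rw [heq, hB'] at hA'
    have H1 : (v : Polynomial K) * p * Polynomial.derivative (lc ρ σ f)
        - ((-(phi ρ σ f).order : ℤ) : Polynomial K) * lc ρ σ f * Polynomial.derivative p =
        Polynomial.C ((ρ : K) * c) * Polynomial.X * lc ρ σ N * Polynomial.derivative p := by
      apply mul_left_cancel₀ (Polynomial.X_ne_zero (R := K))
      rw [← hA', ← Polynomial.C_mul_X_eq_monomial]
      unfold lc
      ring
    have := ode_main p (lc ρ σ f) (lc ρ σ N) v (ρ + σ) (-(phi ρ σ f).order)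
      (-(phi ρ σ N).order) ((ρ : K) * c) hκ hv0 hw (by omega) (by rw [hpb]; exact hvw) ?_
      (by linarith) (lc_ne_zero ρ σ hρ.ne' N hN0) H1 hNC
    · rw [hpb] at this; exact this
    · intro hw0
      by_contra hne
      rw [hpb, hp] at hne
      obtain ⟨i, hi⟩ := phi_coeff_ne ρ σ P _ _ hne
      have hb1 : ((b - 1 : ℕ) : ℤ) = b - 1 := by omega
      rw [hb1, hv] at hi
      have hdvd : ρ ∣ σ := ⟨(i : ℤ) - a, by linear_combination -hi⟩
      have h1 : ρ.natAbs = 1 := by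
        rw [← hgcd]; exact (Int.gcd_eq_natAbs_left hdvd).symm
      omega

/-- If `[P,Q]` is a nonzero constant, `(ρ,σ)` is a direction with `ρ>0`, `σ<0`,
the support of `ℓ_{ρ,σ}(P)` has at least two elements, and `en_{ρ,σ}(P)=(a',b')`
with `a'>b'>0`, then `ρ+σ<0`. -/
theorem stmt3 (K : Type*) [Field K] [CharZero K] (P Q : MvPolynomial (Fin 2) K)
    (c : K) (hc : c ≠ 0) (hPQ : Jb P Q = MvPolynomial.C c)
    (ρ σ : ℤ) (hgcd : Int.gcd ρ σ = 1) (hρ : 0 < ρ) (hσ : σ < 0)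
    (hlead : (LeadSupp ρ σ P).Nontrivial)
    (a' b' : ℕ) (hen : IsEn ρ σ P (a', b')) (hab : b' < a') (hb : 0 < b') :
    ρ + σ < 0 := by
  by_contra hneg
  push Not at hneg
  have hfin : (Supp P).Finite := by
    apply ((P.support.finite_toSet).image (fun m => (m 0, m 1))).subset
    rintro ⟨i, j⟩ h
    refine ⟨Finsupp.single 0 i + Finsupp.single 1 j, ?_, by simp⟩
    rw [Finset.mem_coe, MvPolynomial.mem_support_iff]
    exact h
  have hbdd : BddAbove {d : ℤ | ∃ p ∈ Supp P, d = ρ * (p.1 : ℤ) + σ * (p.2 : ℤ)} := by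
    apply Set.Finite.bddAbove
    apply (hfin.image (fun p => ρ * (p.1 : ℤ) + σ * (p.2 : ℤ))).subset
    rintro d ⟨p, hp, rfl⟩
    exact ⟨p, hp, rfl⟩
  obtain ⟨⟨hS, hwd⟩, hmax⟩ := hen
  simp only at hwd hmax
  have hle : ∀ i j : ℕ, (i, j) ∈ Supp P → ρ * (i : ℤ) + σ * (j : ℤ) ≤ ρ * (a' : ℤ) + σ * (b' : ℤ) := by
    intro i j h
    rw [hwd]
    exact le_csSup hbdd ⟨(i, j), h, rfl⟩
  have hcS : ∀ i j : ℕ, ((phi ρ σ P).coeff (-(ρ * (i : ℤ) + σ * (j : ℤ)))).coeff j ≠ 0 →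
      (i, j) ∈ Supp P := by
    intro i j h
    rw [phi_coeff ρ σ hρ.ne'] at h
    exact h
  have hpc : ((phi ρ σ P).coeff (-(ρ * (a' : ℤ) + σ * (b' : ℤ)))).coeff b' ≠ 0 := by
    rw [phi_coeff ρ σ hρ.ne']; exact hS
  have key := main_aux P Q c hc hPQ ρ σ hgcd hρ hσ hneg a' b' hab hb
    (ρ * (a' : ℤ) + σ * (b' : ℤ)) rfl _ rfl ?_ ?_
  · obtain ⟨q1, h1, q2, h2, hne⟩ := hlead
    have hq : ∀ q ∈ LeadSupp ρ σ P, q = (a', b') := by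
      rintro ⟨i, j⟩ ⟨h3, h4⟩
      simp only at h4
      rw [← hwd] at h4
      have hj : j = b' := by
        apply key
        rw [← h4, phi_coeff ρ σ hρ.ne']
        exact h3
      subst hj
      have h5 : ρ * ((i : ℤ) - a') = 0 := by linear_combination h4
      have h6 := (mul_eq_zero.mp h5).resolve_left hρ.ne'
      rw [Prod.mk.injEq]
      omega
    exact hne ((hq q1 h1).trans (hq q2 h2).symm)
  · intro e he
    by_contra hne
    obtain ⟨j, hj⟩ : ∃ j, ((phi ρ σ P).coeff e).coeff j ≠ 0 := by
      by_contra hall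
      push Not at hall
      exact hne (Polynomial.ext (by simpa using hall))
    obtain ⟨i, rfl⟩ := phi_coeff_ne ρ σ P e j hj
    have := hle i j (hcS i j hj)
    linarith
  · apply le_antisymm
    · rw [Polynomial.natDegree_le_iff_coeff_eq_zero]
      intro j hj
      by_contra hne
      obtain ⟨i, hi⟩ := phi_coeff_ne ρ σ P _ j hne
      rw [hi] at hne
      have h1 := hmax (i, j) ⟨hcS i j hne, by simp only; rw [← hwd]; linarith⟩
      simp only at h1
      omega
    · exact Polynomial.le_natDegree_of_ne_zero hpc

end
end

section
/- Let (ϱ,ς) be a direction with ϱ > 0 and ϱ + ς < 0, let i ≥ 1 be an integer, and let R, G ∈ K[x,y] be (ϱ,ς)-homogeneous polynomials with v_{ϱ,ς}(R) > 0 and [G,R] = R^i. Then the second coordinate of en_{ϱ,ς}(G) is at most (i−1) times the second coordinate of en_{ϱ,ς}(R) plus 1; equivalently, deg_y(G) ≤ (i−1)·deg_y(R) + 1. -/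
open MvPolynomial

noncomputable section

variable {K : Type*} [Field K] [CharZero K]

theorem aux_euler {K : Type*} [Field K] (j : Fin 2) (P : MvPolynomial (Fin 2) K)
    (m : Fin 2 →₀ ℕ) : coeff m (X j * pderiv j P) = (m j : K) * coeff m P := by
  induction P using MvPolynomial.induction_on' with
  | monomial u a =>
    rw [X_mul_pderiv_monomial, coeff_smul, coeff_monomial]
    split_ifs with h
    · subst h; simp
    · simp
  | add p q hp hq =>
    rw [map_add, mul_add, coeff_add, hp, hq, coeff_add, mul_add]

theorem aux_single (m : Fin 2 →₀ ℕ) :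
    Finsupp.single 0 (m 0) + Finsupp.single 1 (m 1) = m := by
  ext j
  fin_cases j <;> simp

theorem aux_info {K : Type*} [Field K] (ρ σ : ℤ) (P : MvPolynomial (Fin 2) K)
    (hh : IsHomog ρ σ P) (e : ℕ × ℕ) (he : IsEn ρ σ P e) (m : Fin 2 →₀ ℕ)
    (hm : coeff m P ≠ 0) :
    ρ * (m 0 : ℤ) + σ * (m 1 : ℤ) = ρ * (e.1 : ℤ) + σ * (e.2 : ℤ) ∧ m 1 ≤ e.2 := by
  have hs : ((m 0, m 1) : ℕ × ℕ) ∈ Supp P := by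
    simpa only [Supp, Set.mem_ofPred_eq, aux_single] using hm
  have h1 := hh _ hs _ he.1.1
  refine ⟨h1, he.2 (m 0, m 1) ⟨hs, ?_⟩⟩
  rw [h1]
  exact he.1.2

theorem aux_weight (ρ σ : ℤ) (m : Fin 2 →₀ ℕ) :
    Finsupp.weight ![ρ, σ] m = ρ * (m 0 : ℤ) + σ * (m 1 : ℤ) := by
  rw [Finsupp.weight_apply, Finsupp.sum_fintype _ _ (by simp)]
  simp [Fin.sum_univ_two, mul_comm]

theorem aux_top {K : Type*} [Field K] (ρ σ : ℤ) (hρ : 0 < ρ) (P Q : MvPolynomial (Fin 2) K)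
    (hP : IsHomog ρ σ P) (hQ : IsHomog ρ σ Q) (eP eQ : ℕ × ℕ)
    (heP : IsEn ρ σ P eP) (heQ : IsEn ρ σ Q eQ) (j k : Fin 2) (mP mQ : Fin 2 →₀ ℕ)
    (hmP : mP = Finsupp.single 0 eP.1 + Finsupp.single 1 eP.2)
    (hmQ : mQ = Finsupp.single 0 eQ.1 + Finsupp.single 1 eQ.2) :
    coeff (mP + mQ) ((X j * pderiv j P) * (X k * pderiv k Q))
      = (mP j : K) * (mQ k : K) * (coeff mP P * coeff mQ Q) := by
  have a0 : mP 0 = eP.1 := by simp [hmP]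
  have a1 : mP 1 = eP.2 := by simp [hmP]
  have b0 : mQ 0 = eQ.1 := by simp [hmQ]
  have b1 : mQ 1 = eQ.2 := by simp [hmQ]
  rw [coeff_mul, Finset.sum_eq_single (mP, mQ)]
  · rw [aux_euler, aux_euler]; ring
  · rintro ⟨p, q⟩ hpq hne
    rw [Finset.HasAntidiagonal.mem_antidiagonal] at hpq
    rw [aux_euler, aux_euler]
    by_cases hp : coeff p P = 0
    · simp [hp]
    by_cases hq : coeff q Q = 0
    · simp [hq]
    exfalso
    obtain ⟨p1, p2⟩ := aux_info ρ σ P hP eP heP p hp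
    obtain ⟨q1, q2⟩ := aux_info ρ σ Q hQ eQ heQ q hq
    have s0 := DFunLike.congr_fun hpq 0
    have s1 := DFunLike.congr_fun hpq 1
    simp only [Finsupp.add_apply, a0, a1, b0, b1] at s0 s1
    have hp1 : p 1 = eP.2 := by omega
    rw [hp1] at p1
    have hp0 : p 0 = eP.1 := by
      have : ρ * (p 0 : ℤ) = ρ * (eP.1 : ℤ) := by linarith
      exact_mod_cast mul_left_cancel₀ hρ.ne' this
    apply hne
    have hpm : p = mP := by
      rw [← aux_single p, hp0, hp1, hmP]
    subst hpm
    exact congrArg (Prod.mk p) (add_left_cancel hpq)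
  · intro h
    exact absurd (by rw [Finset.HasAntidiagonal.mem_antidiagonal]) h

/-- Lemma "maximo grado": if `[G,R]=R^i` with `v_{ϱ,ς}(R)>0`, then the second
coordinate of `en_{ϱ,ς}(G)` is at most `(i−1)` times that of `en_{ϱ,ς}(R)` plus 1. -/
theorem stmt9 (K : Type*) [Field K] [CharZero K]
    (ϱ ς : ℤ) (hgcd : Int.gcd ϱ ς = 1) (hϱ : 0 < ϱ) (hϱς : ϱ + ς < 0)
    (i : ℕ) (hi : 1 ≤ i)
    (R G : MvPolynomial (Fin 2) K) (hR : R ≠ 0) (hG : G ≠ 0)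
    (hhomR : IsHomog ϱ ς R) (hhomG : IsHomog ϱ ς G)
    (hu : 0 < wdeg ϱ ς R) (hbr : Jb G R = R ^ i)
    (eG eR : ℕ × ℕ) (henG : IsEn ϱ ς G eG) (henR : IsEn ϱ ς R eR) :
    eG.2 ≤ (i - 1) * eR.2 + 1 := by
  classical
  have hwR : wdeg ϱ ς R = ϱ * (eR.1 : ℤ) + ς * (eR.2 : ℤ) := henR.1.2.symm
  rw [hwR] at hu
  have hkey : (X 0 * pderiv 0 G) * (X 1 * pderiv 1 R) - (X 1 * pderiv 1 G) * (X 0 * pderiv 0 R)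
      = X 0 * X 1 * R ^ i := by
    rw [← hbr, Jb]; ring
  have hE : ∀ (P : MvPolynomial (Fin 2) K) (e : ℕ × ℕ), IsHomog ϱ ς P → IsEn ϱ ς P e →
      ∀ j, IsWeightedHomogeneous ![ϱ, ς] (X j * pderiv j P)
        (ϱ * (e.1 : ℤ) + ς * (e.2 : ℤ)) := by
    intro P e h1 h2 j m hm
    rw [aux_euler] at hm
    rw [aux_weight]
    exact (aux_info ϱ ς P h1 e h2 m (right_ne_zero_of_mul hm)).1
  have hRh : IsWeightedHomogeneous ![ϱ, ς] R (ϱ * (eR.1 : ℤ) + ς * (eR.2 : ℤ)) := by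
    intro m hm
    rw [aux_weight]
    exact (aux_info ϱ ς R hhomR eR henR m hm).1
  have hL := ((hE G eG hhomG henG 0).mul (hE R eR hhomR henR 1)).sub
    ((hE G eG hhomG henG 1).mul (hE R eR hhomR henR 0))
  rw [hkey] at hL
  have hRR := ((isWeightedHomogeneous_X K ![ϱ, ς] 0).mul
    (isWeightedHomogeneous_X K ![ϱ, ς] 1)).mul (hRh.pow i)
  have hne : (X 0 * X 1 * R ^ i : MvPolynomial (Fin 2) K) ≠ 0 :=
    mul_ne_zero (mul_ne_zero (X_ne_zero _) (X_ne_zero _)) (pow_ne_zero _ hR)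
  have hdeg := hL.inj_right hne hRR
  simp only [Matrix.cons_val_zero, Matrix.cons_val_one, nsmul_eq_mul] at hdeg
  obtain ⟨n, rfl⟩ : ∃ n, i = n + 1 := ⟨i - 1, by omega⟩
  rw [Nat.add_sub_cancel]
  by_contra hcon
  push Not at hcon
  obtain ⟨mG, hmG⟩ : ∃ m : Fin 2 →₀ ℕ, m = Finsupp.single 0 eG.1 + Finsupp.single 1 eG.2 :=
    ⟨_, rfl⟩
  obtain ⟨mR, hmR⟩ : ∃ m : Fin 2 →₀ ℕ, m = Finsupp.single 0 eR.1 + Finsupp.single 1 eR.2 :=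
    ⟨_, rfl⟩
  have a0 : mG 0 = eG.1 := by simp [hmG]
  have a1 : mG 1 = eG.2 := by simp [hmG]
  have b0 : mR 0 = eR.1 := by simp [hmR]
  have b1 : mR 1 = eR.2 := by simp [hmR]
  have hcG : coeff mG G ≠ 0 := by rw [hmG]; exact henG.1.1
  have hcR : coeff mR R ≠ 0 := by rw [hmR]; exact henR.1.1
  have hdR : degreeOf 1 R ≤ eR.2 := degreeOf_le_iff.2 fun m hm =>
    (aux_info ϱ ς R hhomR eR henR m (mem_support_iff.1 hm)).2
  have hz : coeff (mG + mR) (X 0 * X 1 * R ^ (n + 1)) = 0 := by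
    by_contra hc
    have h1 := monomial_le_degreeOf 1 (mem_support_iff.2 hc)
    have h2 := degreeOf_mul_le 1 (X 0 * X 1) (R ^ (n + 1))
    have h3 := degreeOf_mul_le 1 (X 0 : MvPolynomial (Fin 2) K) (X 1)
    have h4 := degreeOf_pow_le 1 R (n + 1)
    have h5 : (n + 1) * degreeOf 1 R ≤ (n + 1) * eR.2 := Nat.mul_le_mul_left _ hdR
    rw [degreeOf_X_self, degreeOf_X_of_ne (by decide)] at h3
    rw [Finsupp.add_apply, a1, b1] at h1
    have h6 : (n + 1) * eR.2 = n * eR.2 + eR.2 := by ring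
    omega
  rw [← hkey, coeff_sub, aux_top ϱ ς hϱ G R hhomG hhomR eG eR henG henR 0 1 mG mR hmG hmR,
    aux_top ϱ ς hϱ G R hhomG hhomR eG eR henG henR 1 0 mG mR hmG hmR, ← sub_mul] at hz
  have hdet := (mul_eq_zero.1 hz).resolve_right (mul_ne_zero hcG hcR)
  rw [a0, a1, b0, b1, sub_eq_zero] at hdet
  have hdet' : (eG.1 : ℤ) * eR.2 = eG.2 * eR.1 := by exact_mod_cast hdet
  have hcon' : (n : ℤ) * eR.2 + 1 < eG.2 := by exact_mod_cast hcon
  have hd0 : (0 : ℤ) ≤ eR.2 := Int.natCast_nonneg _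
  push_cast at hdeg
  have e1 : (eG.2 : ℤ) * (ϱ * eR.1 + ς * eR.2)
      = eR.2 * (n * (ϱ * eR.1 + ς * eR.2) + (ϱ + ς)) := by
    linear_combination (-ϱ) * hdet' + (eR.2 : ℤ) * hdeg
  have e2 : (eR.2 : ℤ) * (ϱ + ς) ≤ 0 := mul_nonpos_of_nonneg_of_nonpos hd0 hϱς.le
  have e3 := mul_lt_mul_of_pos_right hcon' hu
  nlinarith

end
end
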